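/- Let f and g be analytic on the unit disk 𝔻 with f(0) = g(0) = 0, f'(0) = g'(0) = 1, and f, g nonvanishing on the punctured disk 0 < |z| < 1. Suppose f'(z) ≠ 0 and Re(1 + z f''(z)/f'(z)) > −1/2 for all z ∈ 𝔻, and g belongs to 𝒫(1/2) ∪ 𝒞 ∪ 𝒮*(1/2). Then the function F(z) = z^3/(f(z)g(z)) satisfies |F'(z)(z/F(z))^2 − 1| < 1 for every z with 0 < |z| < (4 − √10)/3 ≈ 0.27924; in particular F belongs to the class 𝒰 in the disk |z| < (4 − √10)/3. -/

import Mathlib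

/-!
Put `p = f z / z`, `q = g z / z` and `φ = p q = ∑ φₙ zⁿ`, so that `F = z / φ` and
`F' (z / F)² - 1 = φ - z φ' - 1 = -∑ₙ≥₂ (n - 1) φₙ zⁿ`. The coefficients of `p` are at most
`(n + 2) / 2` (`norm_tc_dslope_Cminus`) and those of `q` at most `1` (`norm_tc_dslope_le_one`), whence
`|φₙ| ≤ (n + 1)(n + 4) / 4`. Summing the majorant series gives
`|F' (z / F)² - 1| ≤ 1 + (-3r² + 8r - 2) / (2 (1 - r)⁴)` with `r = |z|` (`norm_sub_lt_one`), which is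
less than `1` as long as `r` is smaller than the root `(4 - √10) / 3` of the numerator.

All coefficient bounds come from one subordination principle (`norm_tc_le_of_convex`): averaging a
function with values in a convex domain over the rotations by `n`-th roots of unity isolates its
`n`-th coefficient, which the Schwarz lemma then controls. For a half-plane this is Carathéodory's
lemma, and for `g` convex it bounds the coefficients of `g` directly. Where the hypothesis is on
`z f'' / f'` or `z g' / g`, Carathéodory's lemma bounds the coefficients of `E` in an equation
`z y' = E y`, and the recursion for the coefficients of `y` carries the bound over
(`norm_tc_le_of_ode`).
-/

/-- The class ℙ(1/2): normalized analytic functions with Re(h(z)/z) > 1/2 on the unit disk. -/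
def IsClassPHalf (h : ℂ → ℂ) : Prop :=
  ∀ z ∈ Metric.ball (0:ℂ) 1, z ≠ 0 → 1 / 2 < (h z / z).re

/-- The class 𝒞 of convex univalent functions: injective with convex image. -/
def IsClassConvex (h : ℂ → ℂ) : Prop :=
  Set.InjOn h (Metric.ball (0:ℂ) 1) ∧ Convex ℝ (h '' Metric.ball (0:ℂ) 1)

/-- The class 𝒮*(1/2) of starlike functions of order 1/2. -/
def IsClassStarlikeHalf (h : ℂ → ℂ) : Prop :=
  (∀ z : ℂ, 0 < ‖z‖ → ‖z‖ < 1 → h z ≠ 0) ∧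
    ∀ z ∈ Metric.ball (0:ℂ) 1, z ≠ 0 → 1 / 2 < (z * deriv h z / h z).re

section Helpers

open Metric Set Filter Topology Asymptotics

/-! ### Taylor coefficients at the origin -/

/-- The `n`-th Taylor coefficient of `h` at the origin. -/
noncomputable def tc (h : ℂ → ℂ) (n : ℕ) : ℂ := iteratedDeriv n h 0 / (n.factorial : ℂ)

lemma analyticAt_of_diffOn {h : ℂ → ℂ} (hd : DifferentiableOn ℂ h (ball 0 1)) {z : ℂ}
    (hz : ‖z‖ < 1) : AnalyticAt ℂ h z :=
  hd.analyticAt (isOpen_ball.mem_nhds (by simpa using hz))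

lemma tc_zero (h : ℂ → ℂ) : tc h 0 = h 0 := by simp [tc]

lemma tc_hasSum {h : ℂ → ℂ} (hd : DifferentiableOn ℂ h (ball 0 1)) {z : ℂ} (hz : ‖z‖ < 1) :
    HasSum (fun n => tc h n * z ^ n) (h z) := by
  have := Complex.hasSum_taylorSeries_on_ball hd (z := z) (by simpa using hz)
  refine this.congr_fun ?_
  intro n
  simp only [tc, smul_eq_mul, sub_zero]
  ring

lemma tc_deriv (h : ℂ → ℂ) (n : ℕ) : tc (deriv h) n = (n + 1) * tc h (n + 1) := by
  have h1 : (n.factorial : ℂ) ≠ 0 := by exact_mod_cast n.factorial_ne_zero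
  have h2 : (n + 1 : ℂ) ≠ 0 := by exact_mod_cast n.succ_ne_zero
  simp only [tc, iteratedDeriv_succ', Nat.factorial_succ]
  push_cast
  field_simp

lemma tc_mul {h k : ℂ → ℂ} (hh : AnalyticAt ℂ h 0) (hk : AnalyticAt ℂ k 0) (n : ℕ) :
    tc (fun z => h z * k z) n = ∑ i ∈ Finset.range (n + 1), tc h i * tc k (n - i) := by
  simp only [tc]
  rw [iteratedDeriv_fun_mul hh.contDiffAt hk.contDiffAt, Finset.sum_div]
  refine Finset.sum_congr rfl fun i hi => ?_
  have hi' : i ≤ n := by simpa [Nat.lt_succ_iff] using hi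
  have h1 : (n.factorial : ℂ) ≠ 0 := by exact_mod_cast n.factorial_ne_zero
  have h2 : (i.factorial : ℂ) ≠ 0 := by exact_mod_cast i.factorial_ne_zero
  have h3 : ((n - i).factorial : ℂ) ≠ 0 := by exact_mod_cast (n - i).factorial_ne_zero
  have h4 : (n.choose i : ℂ) * i.factorial * (n - i).factorial = n.factorial := by
    exact_mod_cast Nat.choose_mul_factorial_mul_factorial hi'
  rw [← h4]
  have h5 : (n.choose i : ℂ) ≠ 0 := by exact_mod_cast (Nat.choose_pos hi').ne'
  field_simp

lemma tc_congr {h k : ℂ → ℂ} (hd : ∀ z : ℂ, ‖z‖ < 1 → h z = k z) (n : ℕ) : tc h n = tc k n := by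
  have : h =ᶠ[𝓝 0] k := by
    filter_upwards [ball_mem_nhds (0 : ℂ) one_pos] with z hz
    exact hd z (by simpa using hz)
  simp only [tc, this.iteratedDeriv_eq n]

lemma tc_id_mul {k : ℂ → ℂ} (hk : AnalyticAt ℂ k 0) (n : ℕ) :
    tc (fun z => z * k z) (n + 1) = tc k n := by
  have hid : ∀ m, tc (fun z : ℂ => z) m = if m = 1 then 1 else 0 := by
    intro m
    match m with
    | 0 => simp [tc]
    | 1 => simp [tc]
    | m + 2 =>
      have : deriv (fun z : ℂ => z) = fun _ => 1 := by ext; simp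
      simp [tc, iteratedDeriv_succ', this]
  rw [tc_mul (h := fun z => z) analyticAt_id hk, Finset.sum_eq_single 1]
  · simp [hid]
  · intro b _ hb; simp [hid, hb]
  · simp

/-- Taylor's formula with remainder at the origin. -/
lemma tc_taylor {h : ℂ → ℂ} (hh : AnalyticAt ℂ h 0) (n : ℕ) :
    (fun z => h z - ∑ i ∈ Finset.range n, tc h i * z ^ i) =O[𝓝 0] fun z => ‖z‖ ^ n := by
  have := hh.hasFPowerSeriesAt.isBigO_sub_partialSum_pow n
  simpa [FormalMultilinearSeries.partialSum, tc, mul_comm] using this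

/-! ### Coefficients of functions with values in a convex set -/

/-- Averaging over the rotations by `n`-th roots of unity kills the Taylor coefficients whose
index is not divisible by `n`. -/
lemma exists_average {p : ℂ → ℂ} (hp : DifferentiableOn ℂ p (ball 0 1)) {S : Set ℂ}
    (hS : Convex ℝ S) (hpS : ∀ z : ℂ, ‖z‖ < 1 → p z ∈ S) {n : ℕ} (hn : 1 ≤ n) :
    ∃ H : ℂ → ℂ, DifferentiableOn ℂ H (ball 0 1) ∧ (∀ z : ℂ, ‖z‖ < 1 → H z ∈ S) ∧ H 0 = p 0 ∧
      (fun z => H z - p 0 - tc p n * z ^ n) =O[𝓝 0] fun z => ‖z‖ ^ (n + 1) := by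
  obtain ⟨ω, hω⟩ : ∃ ω : ℂ, IsPrimitiveRoot ω n :=
    ⟨_, Complex.isPrimitiveRoot_exp n (by omega)⟩
  have hωn : ‖ω‖ = 1 := hω.norm'_eq_one (by omega)
  have hn0 : (n : ℂ) ≠ 0 := by exact_mod_cast (by omega : n ≠ 0)
  have hrot : ∀ k : ℕ, ∀ z : ℂ, ‖ω ^ k * z‖ = ‖z‖ := fun k z => by simp [hωn]
  refine ⟨fun z => ∑ k ∈ Finset.range n, (n : ℝ)⁻¹ • p (ω ^ k * z), ?_, ?_, ?_, ?_⟩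
  · refine DifferentiableOn.fun_sum fun k _ => DifferentiableOn.fun_const_smul ?_ _
    refine hp.comp (by fun_prop) fun z hz => ?_
    simpa only [mem_ball_zero_iff, hrot] using hz
  · intro z hz
    refine hS.sum_mem (fun _ _ => by positivity) ?_ fun k _ => hpS _ (by rwa [hrot])
    have : (n : ℝ) ≠ 0 := by exact_mod_cast (by omega : n ≠ 0)
    simp [this]
  · simp [hn0]
  · have hT := tc_taylor (analyticAt_of_diffOn hp (z := 0) (by simp)) (n + 1)
    have hsum : (fun z => ∑ k ∈ Finset.range n, (n : ℝ)⁻¹ • (p (ω ^ k * z) -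
        ∑ i ∈ Finset.range (n + 1), tc p i * (ω ^ k * z) ^ i)) =O[𝓝 0] fun z => ‖z‖ ^ (n + 1) := by
      refine IsBigO.fun_sum fun k _ => ?_
      have ht : Tendsto (fun z : ℂ => ω ^ k * z) (𝓝 0) (𝓝 0) := by
        have : Continuous fun z : ℂ => ω ^ k * z := by fun_prop
        simpa using this.tendsto 0
      have := hT.comp_tendsto ht
      simp only [Function.comp_def, hrot] at this
      exact this.const_smul_left ((n : ℝ)⁻¹)
    refine hsum.congr_left fun z => ?_
    have hgeom : ∀ i ∈ Finset.range (n + 1), ∑ k ∈ Finset.range n, (ω ^ k) ^ i =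
        if i = 0 ∨ i = n then (n : ℂ) else 0 := by
      intro i hi
      have e : ∀ k, (ω ^ k) ^ i = (ω ^ i) ^ k := fun k => by rw [← pow_mul, ← pow_mul, mul_comm]
      simp only [e]
      split_ifs with hc
      · rcases hc with rfl | rfl
        · simp
        · simp [hω.pow_eq_one]
      · have h1 : ω ^ i ≠ 1 := by
          rw [Ne, hω.pow_eq_one_iff_dvd]
          intro hd
          have := Nat.le_of_dvd (by omega) hd
          simp at hi
          omega
        have h2 := geom_sum_mul (ω ^ i) n
        rw [← pow_mul, mul_comm i n, pow_mul, hω.pow_eq_one, one_pow, sub_self] at h2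
        exact (mul_eq_zero.mp h2).resolve_right (sub_ne_zero.mpr h1)
    simp only [smul_sub, Finset.sum_sub_distrib]
    rw [sub_sub]
    congr 1
    have : ∀ k ∈ Finset.range n, ((n : ℝ)⁻¹ • ∑ i ∈ Finset.range (n + 1), tc p i * (ω ^ k * z) ^ i : ℂ)
        = ∑ i ∈ Finset.range (n + 1), (n : ℂ)⁻¹ * tc p i * z ^ i * (ω ^ k) ^ i := by
      intro k _
      rw [Complex.real_smul, Finset.mul_sum]
      refine Finset.sum_congr rfl fun i _ => ?_
      push_cast
      rw [mul_pow]; ring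
    rw [Finset.sum_congr rfl this, Finset.sum_comm]
    simp only [← Finset.mul_sum]
    rw [Finset.sum_congr rfl fun i hi => by rw [hgeom i hi], Finset.sum_range_succ,
      Finset.sum_eq_single 0]
    · simp only [true_or, or_true, if_true, tc_zero]
      field_simp
    · intro b hb hb0
      have : ¬ (b = 0 ∨ b = n) := by simp at hb; omega
      simp [this]
    · intro h; simp at h; omega

/-- **Rogosinski–Loewner**: let `p` take values in a convex set `S` on which `g` has a holomorphic
right inverse `φ : S → 𝔻` with `φ (p 0) = 0`. Then `|pₙ| ≤ |g'(0)|` for `n ≥ 1`. With `H` the average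
of `p` over the rotations by `n`-th roots of unity, `W = φ ∘ H` is a self-map of `𝔻` vanishing to
order `n` at the origin, so `|W z| ≤ |z| ^ n` by the Schwarz lemma; dividing `H - p 0 = g ∘ W - g 0`
by `z ^ n` and letting `z → 0` gives the bound. -/
lemma norm_tc_le_of_convex {p g φ : ℂ → ℂ} (hp : DifferentiableOn ℂ p (ball 0 1)) {S : Set ℂ}
    (hS : Convex ℝ S) (hpS : ∀ z : ℂ, ‖z‖ < 1 → p z ∈ S) (hg : DifferentiableAt ℂ g 0)
    (hφ : ∀ y ∈ S, DifferentiableAt ℂ φ y) (hφ1 : ∀ y ∈ S, ‖φ y‖ < 1)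
    (hgφ : ∀ y ∈ S, g (φ y) = y) (hφ0 : φ (p 0) = 0) {n : ℕ} (hn : 1 ≤ n) :
    ‖tc p n‖ ≤ ‖deriv g 0‖ := by
  obtain ⟨H, hHd, hHS, hH0, hHO⟩ := exists_average hp hS hpS hn
  have hp0 : p 0 ∈ S := hpS 0 (by simp)
  set W : ℂ → ℂ := fun z => φ (H z) with hW
  have hW0 : W 0 = 0 := by simp [hW, hH0, hφ0]
  have hWd : DifferentiableOn ℂ W (ball 0 1) := fun z hz =>
    (hφ _ (hHS z (by simpa using hz))).comp_differentiableWithinAt z (hHd z hz)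
  have hHcont : Tendsto H (𝓝 0) (𝓝 (p 0)) := by
    have := (analyticAt_of_diffOn hHd (z := 0) (by simp)).continuousAt.tendsto
    rwa [hH0] at this
  have hsmall : (fun z => ‖z‖ ^ (n + 1)) =o[𝓝 (0 : ℂ)] fun z => ‖z‖ ^ n := by
    have := (isLittleO_pow_pow (𝕜 := ℝ) (show n < n + 1 by omega)).comp_tendsto
      (tendsto_norm_zero (E := ℂ))
    exact this
  have hHO' : (fun z => H z - p 0) =O[𝓝 0] fun z => ‖z‖ ^ n := by
    have h1 : (fun z => tc p n * z ^ n) =O[𝓝 0] fun z : ℂ => ‖z‖ ^ n :=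
      IsBigO.of_bound ‖tc p n‖ (by simp)
    have := (hHO.trans_isLittleO hsmall).isBigO.add h1
    simpa using this
  have hWO : (fun z => W z - W 0) =O[𝓝 0] fun z => ‖z‖ ^ n := by
    have h1 := (hφ _ hp0).isBigO_sub.comp_tendsto hHcont
    have := h1.trans hHO'
    simpa [Function.comp_def, hW, hH0] using this
  obtain ⟨m, rfl⟩ : ∃ m, n = m + 1 := ⟨n - 1, by omega⟩
  have hWo : (fun z => W z - W 0) =o[𝓝 0] fun z => ‖z - 0‖ ^ m := by
    refine hWO.trans_isLittleO ?_
    have := (isLittleO_pow_pow (𝕜 := ℝ) (show m < m + 1 by omega)).comp_tendsto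
      (tendsto_norm_zero (E := ℂ))
    simpa [Function.comp_def] using this
  have hWle : ∀ z : ℂ, ‖z‖ < 1 → ‖W z‖ ≤ ‖z‖ ^ (m + 1) := by
    intro z hz
    have := Complex.dist_le_mul_div_pow_of_mapsTo_ball_of_isLittleO (R₂ := 1) hWd
      (fun z hz => by simpa [hW0] using (hφ1 _ (hHS z (by simpa using hz))).le) hWo
      (z := z) (by simpa using hz)
    simpa [hW0] using this
  have hg0 : g 0 = p 0 := by have := hgφ _ hp0; rwa [hφ0] at this
  have hgW : ∀ z : ℂ, ‖z‖ < 1 → H z - p 0 = W z * dslope g 0 (W z) := by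
    intro z hz
    have := sub_smul_dslope g 0 (W z)
    rw [smul_eq_mul, sub_zero] at this
    rw [this, hg0]
    simp only [hW, hgφ _ (hHS z hz)]
  have hWt : Tendsto W (𝓝 0) (𝓝 0) := by
    have := (analyticAt_of_diffOn hWd (z := 0) (by simp)).continuousAt.tendsto
    rwa [hW0] at this
  have hlim1 : Tendsto (fun z => ‖dslope g 0 (W z)‖) (𝓝[≠] 0) (𝓝 ‖deriv g 0‖) := by
    have h1 : Tendsto (dslope g 0) (𝓝 0) (𝓝 (deriv g 0)) := by
      have := (continuousAt_dslope_same.mpr hg).tendsto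
      rwa [dslope_same] at this
    exact (h1.comp (hWt.mono_left nhdsWithin_le_nhds)).norm
  have hlim2 : Tendsto (fun z => ‖(H z - p 0) / z ^ (m + 1)‖) (𝓝[≠] 0) (𝓝 ‖tc p (m + 1)‖) := by
    refine Tendsto.norm ?_
    have h1 : Tendsto (fun z => (H z - p 0 - tc p (m + 1) * z ^ (m + 1)) / z ^ (m + 1)) (𝓝[≠] 0)
        (𝓝 0) := by
      refine ((hHO.trans_isLittleO hsmall).trans_isBigO ?_).tendsto_div_nhds_zero.mono_left
        nhdsWithin_le_nhds
      exact IsBigO.of_bound 1 (by simp)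
    have h2 := h1.add_const (tc p (m + 1))
    rw [zero_add] at h2
    refine h2.congr' ?_
    filter_upwards [self_mem_nhdsWithin] with z hz
    have : z ≠ 0 := hz
    field_simp
    ring
  refine le_of_tendsto_of_tendsto hlim2 hlim1 ?_
  filter_upwards [self_mem_nhdsWithin,
    nhdsWithin_le_nhds (ball_mem_nhds (0 : ℂ) one_pos)] with z hz hz1
  have hz1 : ‖z‖ < 1 := by simpa using hz1
  have hz0 : 0 < ‖z‖ ^ (m + 1) := pow_pos (norm_pos_iff.mpr hz) _
  rw [hgW z hz1, norm_div, norm_pow, norm_mul, div_le_iff₀ hz0, mul_comm]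
  exact mul_le_mul_of_nonneg_left (hWle z hz1) (norm_nonneg _)

/-- **Carathéodory's lemma**, obtained from the conformal map `w ↦ (1 + w) / (1 - w)` of `𝔻` onto
the right half-plane. -/
lemma norm_tc_le_two {P : ℂ → ℂ} (hP : DifferentiableOn ℂ P (ball 0 1)) (hP0 : P 0 = 1)
    (hre : ∀ z : ℂ, ‖z‖ < 1 → 0 < (P z).re) {n : ℕ} (hn : 1 ≤ n) : ‖tc P n‖ ≤ 2 := by
  have hne : ∀ y : ℂ, 0 < y.re → y + 1 ≠ 0 := fun y hy h => by
    have := congrArg Complex.re h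
    simp at this
    linarith
  have hd : HasDerivAt (fun w : ℂ => (1 + w) / (1 - w)) 2 0 := by
    have h := ((hasDerivAt_id (0 : ℂ)).const_add 1).div ((hasDerivAt_id (0 : ℂ)).const_sub 1)
      (by simp)
    refine h.congr_deriv ?_
    norm_num
  have := norm_tc_le_of_convex (S := {y : ℂ | 0 < y.re}) (φ := fun y => (y - 1) / (y + 1)) hP
    (convex_halfSpace_re_gt 0) hre hd.differentiableAt
    (fun y hy => by
      have := hne y hy
      fun_prop (disch := assumption))
    (fun y hy => by
      have h1 := hne y hy
      have hy' : 0 < y.re := hy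
      rw [norm_div, div_lt_one (norm_pos_iff.mpr h1)]
      refine lt_of_pow_lt_pow_left₀ 2 (norm_nonneg _) ?_
      rw [← Complex.normSq_eq_norm_sq, ← Complex.normSq_eq_norm_sq, Complex.normSq_apply,
        Complex.normSq_apply]
      simp
      nlinarith)
    (fun y hy => by
      have h1 := hne y hy
      have h2 : 1 - (y - 1) / (y + 1) ≠ 0 := by
        have : 1 - (y - 1) / (y + 1) = 2 / (y + 1) := by field_simp; ring
        rw [this]
        exact div_ne_zero two_ne_zero h1
      rw [div_eq_iff h2]
      field_simp
      ring)
    (by simp [hP0]) hn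
  rwa [hd.deriv, Complex.norm_ofNat] at this

/-- The inverse of an injective holomorphic function on the disk is holomorphic on the image. It is
continuous by the open mapping theorem and differentiable off the isolated critical values, which
are therefore removable singularities. -/
lemma differentiableAt_invFunOn {g : ℂ → ℂ} (hg : AnalyticOnNhd ℂ g (ball 0 1))
    (hinj : InjOn g (ball 0 1)) (hg1 : deriv g 0 ≠ 0) {w₀ : ℂ} (hw₀ : w₀ ∈ ball (0 : ℂ) 1) :
    DifferentiableAt ℂ (Function.invFunOn g (ball 0 1)) (g w₀) := by
  set φ := Function.invFunOn g (ball 0 1) with hφ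
  have hleft : ∀ w ∈ ball (0 : ℂ) 1, φ (g w) = w := fun w hw => hinj.leftInvOn_invFunOn hw
  have hopen : ∀ w ∈ ball (0 : ℂ) 1, 𝓝 (g w) ≤ map g (𝓝 w) := by
    intro w hw
    refine (hg w hw).eventually_constant_or_nhds_le_map_nhds.resolve_left fun hc => ?_
    -- a locally constant `g` would contradict injectivity
    have h1 : ∀ᶠ z in 𝓝[≠] w, False := by
      filter_upwards [self_mem_nhdsWithin, nhdsWithin_le_nhds hc,
        nhdsWithin_le_nhds (isOpen_ball.mem_nhds hw)] with z hz hz1 hz2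
      exact hz (hinj hz2 hw hz1)
    exact (eventually_const.mp h1)
  have hcont : ∀ w ∈ ball (0 : ℂ) 1, Tendsto φ (𝓝 (g w)) (𝓝 w) := by
    intro w hw
    refine Tendsto.mono_left ?_ (hopen w hw)
    rw [tendsto_map'_iff]
    refine tendsto_id.congr' ?_
    filter_upwards [isOpen_ball.mem_nhds hw] with z hz
    exact (hleft z hz).symm
  have himg : ∀ w ∈ ball (0 : ℂ) 1, ∀ᶠ y in 𝓝 (g w), ∃ z ∈ ball (0 : ℂ) 1, g z = y := by
    intro w hw
    refine hopen w hw ?_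
    rw [mem_map]
    filter_upwards [isOpen_ball.mem_nhds hw] with z hz
    exact ⟨z, hz, rfl⟩
  have hreg : ∀ w ∈ ball (0 : ℂ) 1, deriv g w ≠ 0 → DifferentiableAt ℂ φ (g w) := by
    intro w hw hd
    have hc := hcont w hw
    have hc' : ContinuousAt φ (g w) := by rwa [ContinuousAt, hleft w hw]
    refine (HasDerivAt.of_local_left_inverse (f := g) (f' := deriv g w) hc' ?_ hd ?_).differentiableAt
    · rw [hleft w hw]
      exact (hg w hw).differentiableAt.hasDerivAt
    · filter_upwards [himg w hw] with y ⟨z, hz, hzy⟩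
      rw [← hzy, hleft z hz]
  have hiso : ∀ᶠ w in 𝓝[≠] w₀, deriv g w ≠ 0 := by
    refine (hg.deriv w₀ hw₀).eventually_eq_zero_or_eventually_ne_zero.resolve_left fun hc => ?_
    exact hg1 (hg.deriv.eqOn_of_preconnected_of_eventuallyEq (g := fun _ => 0)
      (fun _ _ => analyticAt_const) (convex_ball _ _).isPreconnected hw₀ hc (by simp))
  refine (Complex.analyticAt_of_differentiable_on_punctured_nhds_of_continuousAt ?_ ?_).differentiableAt
  · have h1 : Tendsto φ (𝓝[≠] (g w₀)) (𝓝[≠] w₀) := by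
      refine tendsto_nhdsWithin_iff.mpr ⟨(hcont w₀ hw₀).mono_left nhdsWithin_le_nhds, ?_⟩
      filter_upwards [self_mem_nhdsWithin, nhdsWithin_le_nhds (himg w₀ hw₀)] with y hy ⟨z, hz, hzy⟩ h
      apply hy
      rw [← hzy, hleft z hz] at h
      rw [← hzy, h]; rfl
    filter_upwards [h1.eventually hiso, nhdsWithin_le_nhds (himg w₀ hw₀)] with y hy ⟨z, hz, hzy⟩
    rw [← hzy, hleft z hz] at hy
    rw [← hzy]
    exact hreg z hz hy
  · rw [ContinuousAt, hleft w₀ hw₀]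
    exact hcont w₀ hw₀

/-- The subordination argument with `p = g`: a normalized convex function has `|bₙ| ≤ 1`. -/
lemma norm_tc_le_one_of_convex {g : ℂ → ℂ} (hg : AnalyticOnNhd ℂ g (ball 0 1))
    (hg1 : deriv g 0 = 1) (hc : IsClassConvex g) {n : ℕ} (hn : 1 ≤ n) : ‖tc g n‖ ≤ 1 := by
  obtain ⟨hinj, hconv⟩ := hc
  have h0 : (0 : ℂ) ∈ ball (0 : ℂ) 1 := by simp
  have := norm_tc_le_of_convex (p := g) (g := g) (φ := Function.invFunOn g (ball 0 1))
    hg.differentiableOn hconv (fun z hz => ⟨z, by simpa using hz, rfl⟩) (hg 0 h0).differentiableAt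
    (by
      rintro _ ⟨w, hw, rfl⟩
      exact differentiableAt_invFunOn hg hinj (by simp [hg1]) hw)
    (by
      rintro _ ⟨w, hw, rfl⟩
      rw [hinj.leftInvOn_invFunOn hw]
      simpa using hw)
    (by
      rintro _ ⟨w, hw, rfl⟩
      rw [hinj.leftInvOn_invFunOn hw])
    (hinj.leftInvOn_invFunOn h0) hn
  simpa [hg1] using this

/-! ### Majorants for differential equations -/

lemma tc_const_add_mul {E : ℂ → ℂ} (a b : ℂ) {n : ℕ} (hn : 1 ≤ n) :
    tc (fun z => b + a * E z) n = a * tc E n := by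
  simp only [tc]
  rw [iteratedDeriv_const_add hn, iteratedDeriv_const_mul_field, mul_div_assoc]

/-- Carathéodory's lemma for the function `1 + a E`, read as a bound on the coefficients of `E`. -/
lemma norm_tc_le_of_re {E : ℂ → ℂ} (hE : DifferentiableOn ℂ E (ball 0 1)) (hE0 : E 0 = 0) {a : ℝ}
    (ha : 0 < a) (hre : ∀ z : ℂ, ‖z‖ < 1 → -1 < a * (E z).re) {n : ℕ} (hn : 1 ≤ n) :
    ‖tc E n‖ ≤ 2 / a := by
  have := norm_tc_le_two (P := fun z => 1 + (a : ℂ) * E z) ((hE.const_mul _).const_add _)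
    (by simp [hE0]) (fun z hz => by
      have := hre z hz
      simp
      linarith) hn
  rw [tc_const_add_mul _ _ hn, norm_mul, Complex.norm_real, Real.norm_of_nonneg ha.le] at this
  rw [le_div_iff₀ ha]
  linarith

/-- Majorant principle for the differential equation `z q' = E q`: the recursion
`n qₙ = ∑_{1 ≤ k ≤ n} Eₖ qₙ₋ₖ` propagates a bound on the coefficients of `E` to those of `q`. -/
lemma norm_tc_le_of_ode {q E : ℂ → ℂ} (hq : DifferentiableOn ℂ q (ball 0 1))
    (hE : DifferentiableOn ℂ E (ball 0 1)) (hq0 : q 0 = 1) (hE0 : E 0 = 0) {A : ℝ}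
    (hA : ∀ k, 1 ≤ k → ‖tc E k‖ ≤ A)
    (hode : ∀ z : ℂ, ‖z‖ < 1 → z * deriv q z = E z * q z) {M : ℕ → ℝ} (hM0 : M 0 = 1)
    (hM : ∀ n, A * ∑ j ∈ Finset.range (n + 1), M j ≤ (n + 1) * M (n + 1)) (n : ℕ) :
    ‖tc q n‖ ≤ M n := by
  have hq' : AnalyticAt ℂ q 0 := analyticAt_of_diffOn hq (by simp)
  have hE' : AnalyticAt ℂ E 0 := analyticAt_of_diffOn hE (by simp)
  have hA0 : 0 ≤ A := (norm_nonneg _).trans (hA 1 le_rfl)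
  induction n using Nat.strong_induction_on with
  | _ n ih =>
    rcases n with _ | n
    · simp [tc_zero, hq0, hM0]
    · have h1 := tc_congr hode (n + 1)
      rw [tc_id_mul hq'.deriv, tc_deriv, tc_mul hE' hq', Finset.sum_range_succ', tc_zero, hE0,
        zero_mul, add_zero] at h1
      have h2 : ‖∑ i ∈ Finset.range (n + 1), tc E (i + 1) * tc q (n + 1 - (i + 1))‖ ≤
          A * ∑ j ∈ Finset.range (n + 1), M j := by
        rw [← Finset.sum_range_reflect M, Finset.mul_sum]
        refine (norm_sum_le _ _).trans (Finset.sum_le_sum fun i hi => ?_)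
        have hi : i < n + 1 := by simpa using hi
        rw [norm_mul, show n + 1 - (i + 1) = n + 1 - 1 - i by omega]
        exact mul_le_mul (hA _ (by omega)) (ih _ (by omega)) (norm_nonneg _) hA0
      rw [← h1, norm_mul] at h2
      have h3 : ‖(n + 1 : ℂ)‖ = n + 1 := by
        have := Complex.norm_natCast (n + 1)
        push_cast at this
        exact this
      rw [h3] at h2
      exact le_of_mul_le_mul_left (h2.trans (hM n)) (by positivity)

/-! ### Coefficient bounds in the function classes -/

lemma eq_mul_dslope {f : ℂ → ℂ} (hf0 : f 0 = 0) (z : ℂ) : f z = z * dslope f 0 z := by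
  have := sub_smul_dslope f 0 z
  simpa [hf0] using this.symm

lemma diffOn_dslope {f : ℂ → ℂ} (hf : AnalyticOnNhd ℂ f (ball 0 1)) :
    DifferentiableOn ℂ (dslope f 0) (ball 0 1) :=
  (Complex.differentiableOn_dslope (ball_mem_nhds _ one_pos)).mpr hf.differentiableOn

lemma tc_dslope {f : ℂ → ℂ} (hf : AnalyticOnNhd ℂ f (ball 0 1)) (hf0 : f 0 = 0) (n : ℕ) :
    tc f (n + 1) = tc (dslope f 0) n := by
  rw [tc_congr (fun z _ => eq_mul_dslope hf0 z) (n + 1), tc_id_mul]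
  exact analyticAt_of_diffOn (diffOn_dslope hf) (by simp)

lemma dslope_ne_zero {f : ℂ → ℂ} (hf0 : f 0 = 0) (hf1 : deriv f 0 = 1)
    (hfne : ∀ z : ℂ, 0 < ‖z‖ → ‖z‖ < 1 → f z ≠ 0) {z : ℂ} (hz : ‖z‖ < 1) : dslope f 0 z ≠ 0 := by
  rcases eq_or_ne z 0 with rfl | hz0
  · simp [hf1]
  · intro h
    apply hfne z (norm_pos_iff.mpr hz0) hz
    rw [eq_mul_dslope hf0, h, mul_zero]

/-- In the class `𝒞(-1/2)` the `n`-th coefficient of `f z / z`, which is `aₙ₊₁`, is at most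
`(n + 2) / 2`: the function `f'` solves `z y' = E y` with `E = z f'' / f'`, whose coefficients are
bounded by `3`, and `(1 - z)⁻³` is the majorant. -/
lemma norm_tc_dslope_Cminus {f : ℂ → ℂ} (hfa : AnalyticOnNhd ℂ f (ball 0 1)) (hf0 : f 0 = 0)
    (hf1 : deriv f 0 = 1) (hfd : ∀ z ∈ ball (0 : ℂ) 1, deriv f z ≠ 0)
    (hfC : ∀ z ∈ ball (0 : ℂ) 1, -(1 / 2) < (1 + z * deriv (deriv f) z / deriv f z).re) (n : ℕ) :
    ‖tc (dslope f 0) n‖ ≤ (n + 2) / 2 := by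
  have hE : DifferentiableOn ℂ (fun z => z * deriv (deriv f) z / deriv f z) (ball 0 1) :=
    (differentiableOn_id.mul hfa.deriv.deriv.differentiableOn).div hfa.deriv.differentiableOn hfd
  have h := norm_tc_le_of_ode (q := deriv f) (A := 3)
    (M := fun n => (n + 1) * (n + 2) / 2) hfa.deriv.differentiableOn hE hf1 (by simp)
    (fun k hk => (norm_tc_le_of_re hE (by simp) (a := 2 / 3) (by norm_num) (fun z hz => by
      have := hfC z (by simpa using hz)
      rw [Complex.add_re, Complex.one_re] at this
      linarith) hk).trans (by norm_num))
    (fun z hz => by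
      have := hfd z (by simpa using hz)
      field_simp)
    (by norm_num)
    (fun n => le_of_eq (by
      have : ∑ j ∈ Finset.range (n + 1), ((j : ℝ) + 1) * (j + 2) / 2 =
          (n + 1) * (n + 2) * (n + 3) / 6 := by
        induction n with
        | zero => norm_num
        | succ n ih => rw [Finset.sum_range_succ, ih]; push_cast; ring
      rw [this]; push_cast; ring)) n
  rw [tc_deriv, tc_dslope hfa hf0, norm_mul] at h
  have h3 : ‖(n + 1 : ℂ)‖ = n + 1 := by
    have := Complex.norm_natCast (n + 1)
    push_cast at this
    exact this
  rw [h3] at h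
  refine le_of_mul_le_mul_left (h.trans (le_of_eq ?_)) (show (0 : ℝ) < n + 1 by positivity)
  ring

/-- In each of the classes `𝒫(1/2)`, `𝒞`, `𝒮*(1/2)` the coefficients of `g z / z` are at most `1`.
For `𝒮*(1/2)`, the function `q = g z / z` solves `z q' = E q` with `E = z g' / g - 1`, whose
coefficients are bounded by `1`. -/
lemma norm_tc_dslope_le_one {g : ℂ → ℂ} (hga : AnalyticOnNhd ℂ g (ball 0 1)) (hg0 : g 0 = 0)
    (hg1 : deriv g 0 = 1) (hgne : ∀ z : ℂ, 0 < ‖z‖ → ‖z‖ < 1 → g z ≠ 0)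
    (hgcl : IsClassPHalf g ∨ IsClassConvex g ∨ IsClassStarlikeHalf g) (n : ℕ) :
    ‖tc (dslope g 0) n‖ ≤ 1 := by
  have hq := diffOn_dslope hga
  have hq0 : dslope g 0 0 = 1 := by simp [hg1]
  have hq_eq : ∀ z : ℂ, z ≠ 0 → dslope g 0 z = g z / z := fun z hz => by
    rw [eq_mul_dslope hg0 z]; field_simp
  rcases hgcl with hP | hC | hS
  · rcases Nat.eq_zero_or_pos n with rfl | hn
    · simp [tc_zero, hg1]
    · have h := norm_tc_le_of_re (E := fun z => -1 + 1 * dslope g 0 z) (a := 2)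
        ((hq.const_mul _).const_add _) (by simp [hg1]) (by norm_num) (fun z hz => by
          rcases eq_or_ne z 0 with rfl | hz0
          · simp [hg1]
          · have := hP z (by simpa using hz) hz0
            rw [← hq_eq z hz0] at this
            simp
            linarith) hn
      rw [tc_const_add_mul _ _ hn] at h
      simpa using h
  · rw [← tc_dslope hga hg0]
    exact norm_tc_le_one_of_convex hga hg1 hC (by omega)
  · have hne : ∀ z ∈ ball (0 : ℂ) 1, dslope g 0 z ≠ 0 := fun z hz =>
      dslope_ne_zero hg0 hg1 hgne (by simpa using hz)
    have hq'd : DifferentiableOn ℂ (deriv (dslope g 0)) (ball 0 1) := hq.deriv isOpen_ball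
    have hE : DifferentiableOn ℂ (fun z => z * deriv (dslope g 0) z / dslope g 0 z) (ball 0 1) :=
      (differentiableOn_id.mul hq'd).div hq hne
    refine norm_tc_le_of_ode (A := 1) (M := fun _ => 1) hq hE hq0 (by simp)
      (fun k hk => (norm_tc_le_of_re hE (by simp) (a := 2) (by norm_num) (fun z hz => ?_) hk).trans
        (by norm_num))
      (fun z hz => ?_) rfl (fun n => by simp) n
    · rcases eq_or_ne z 0 with rfl | hz0
      · simp
      · have hz' : z ∈ ball (0 : ℂ) 1 := by simpa using hz
        have h1 := hS.2 z hz' hz0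
        have hd : deriv g z = dslope g 0 z + z * deriv (dslope g 0) z := by
          have e : g = fun w => w * dslope g 0 w := funext (eq_mul_dslope hg0)
          have hqz := (analyticAt_of_diffOn hq hz).differentiableAt.hasDerivAt
          have := ((hasDerivAt_id z).mul hqz).deriv
          rw [show (id * dslope g 0 : ℂ → ℂ) = g from e.symm] at this
          simpa using this
        have h2 : z * deriv g z / g z = 1 + z * deriv (dslope g 0) z / dslope g 0 z := by
          have := hne z hz'
          rw [hd, eq_mul_dslope hg0 z]
          field_simp
        rw [h2, Complex.add_re, Complex.one_re] at h1
        linarith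
    · have := hne z (by simpa using hz)
      field_simp

/-! ### The estimate of the series -/

/-- If `|φₙ| ≤ (n + 1)(n + 4) / 4`, then `|φ - z φ' - 1| ≤ ∑ₙ≥₂ (n - 1)(n + 1)(n + 4) / 4 rⁿ`, and
this series is `1 + (-3r² + 8r - 2) / (2 (1 - r)⁴)`. -/
lemma norm_sub_lt_one {φ : ℂ → ℂ} (hφ : DifferentiableOn ℂ φ (ball 0 1)) (hφ0 : φ 0 = 1)
    (hc : ∀ n : ℕ, ‖tc φ n‖ ≤ (n + 1) * (n + 4) / 4) {z : ℂ} (hz : ‖z‖ < 1)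
    (hr : -3 * ‖z‖ ^ 2 + 8 * ‖z‖ - 2 < 0) : ‖φ z - z * deriv φ z - 1‖ < 1 := by
  have hφ' : DifferentiableOn ℂ (fun z => z * deriv φ z) (ball 0 1) :=
    differentiableOn_id.mul (hφ.deriv isOpen_ball)
  have hcoef : ∀ n : ℕ, tc (fun z => z * deriv φ z) n = n * tc φ n := by
    rintro (_ | n)
    · simp [tc_zero]
    · rw [tc_id_mul (analyticAt_of_diffOn (hφ.deriv isOpen_ball) (by simp)), tc_deriv]
      push_cast; ring
  have hs := ((tc_hasSum hφ hz).sub (tc_hasSum hφ' hz)).sub (hasSum_ite_eq 0 (1 : ℂ))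
  set r := ‖z‖ with hrdef
  have hr0 : 0 ≤ r := norm_nonneg z
  have hr1 : ‖r‖ < 1 := by rwa [Real.norm_of_nonneg hr0]
  have hg := (((((hasSum_choose_mul_geometric_of_norm_lt_one 3 hr1).mul_left 6).sub
    ((hasSum_choose_mul_geometric_of_norm_lt_one 2 hr1).mul_left 4)).sub
    ((hasSum_choose_mul_geometric_of_norm_lt_one 1 hr1).mul_left 6)).div_const 4).add
    (hasSum_ite_eq 0 (1 : ℝ))
  have hle := hs.norm_le_of_bounded hg fun n => by
    rw [hcoef]
    have c1 : ((n + 1).choose 1 : ℝ) = n + 1 := by simp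
    have c2 : ((n + 2).choose 2 : ℝ) = (n + 1) * (n + 2) / 2 := by
      rw [Nat.cast_choose_two]; push_cast; ring
    have c3 : ((n + 3).choose 3 : ℝ) = (n + 1) * (n + 2) * (n + 3) / 6 := by
      have h : (n + 2 + 1) * (n + 2).choose 2 = (n + 2 + 1).choose 3 * 3 :=
        Nat.add_one_mul_choose_eq (n + 2) 2
      have h' : ((n : ℝ) + 2 + 1) * (n + 2).choose 2 = (n + 3).choose 3 * 3 := by exact_mod_cast h
      rw [c2] at h'
      linarith
    rw [c1, c2, c3]
    rcases n with _ | n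
    · simp [tc_zero, hφ0]
      norm_num
    · have e : tc φ (n + 1) * z ^ (n + 1) - (↑(n + 1) * tc φ (n + 1)) * z ^ (n + 1) -
          (if n + 1 = 0 then 1 else 0) = -(n * (tc φ (n + 1) * z ^ (n + 1))) := by
        simp; ring
      rw [e, norm_neg, norm_mul, norm_mul, norm_pow, Complex.norm_natCast, ← hrdef]
      have h1 := mul_le_mul_of_nonneg_left
        (mul_le_mul_of_nonneg_right (hc (n + 1)) (pow_nonneg hr0 (n + 1))) (Nat.cast_nonneg (α := ℝ) n)
      refine h1.trans (le_of_eq ?_)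
      simp
      ring
  refine hle.trans_lt ?_
  have h1 : 0 < 1 - r := by linarith
  have : (6 * (1 / (1 - r) ^ (3 + 1)) - 4 * (1 / (1 - r) ^ (2 + 1)) - 6 * (1 / (1 - r) ^ (1 + 1))) / 4
      = (-3 * r ^ 2 + 8 * r - 2) / (2 * (1 - r) ^ 4) := by
    field_simp
    ring
  rw [this]
  have : (-3 * r ^ 2 + 8 * r - 2) / (2 * (1 - r) ^ 4) < 0 := div_neg_of_neg_of_pos hr (by positivity)
  linarith

end Helpers

theorem radius_univalence_Cminus_PCS
    (f g F : ℂ → ℂ)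
    (hfa : AnalyticOnNhd ℂ f (Metric.ball (0:ℂ) 1))
    (hga : AnalyticOnNhd ℂ g (Metric.ball (0:ℂ) 1))
    (hf0 : f 0 = 0) (hf1 : deriv f 0 = 1) (hg0 : g 0 = 0) (hg1 : deriv g 0 = 1)
    (hfne : ∀ z : ℂ, 0 < ‖z‖ → ‖z‖ < 1 → f z ≠ 0)
    (hgne : ∀ z : ℂ, 0 < ‖z‖ → ‖z‖ < 1 → g z ≠ 0)
    (hfd : ∀ z ∈ Metric.ball (0:ℂ) 1, deriv f z ≠ 0)
    (hfC : ∀ z ∈ Metric.ball (0:ℂ) 1,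
      -(1 / 2) < (1 + z * deriv (deriv f) z / deriv f z).re)
    (hgcl : IsClassPHalf g ∨ IsClassConvex g ∨ IsClassStarlikeHalf g)
    (hF : ∀ z : ℂ, F z = z ^ 3 / (f z * g z)) :
    ∀ z : ℂ, 0 < ‖z‖ → ‖z‖ < (4 - Real.sqrt 10) / 3 →
      ‖deriv F z * (z / F z) ^ 2 - 1‖ < 1 := by
  intro z hz0 hz
  have hsq : Real.sqrt 10 ^ 2 = 10 := Real.sq_sqrt (by norm_num)
  have hs3 : 3 < Real.sqrt 10 := by
    rw [Real.lt_sqrt (by norm_num)]; norm_num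
  have hz1 : ‖z‖ < 1 := by linarith
  -- `(4 - √10) / 3` is the smaller root of `3r² - 8r + 2`
  have hr : -3 * ‖z‖ ^ 2 + 8 * ‖z‖ - 2 < 0 := by nlinarith
  have hp := diffOn_dslope hfa
  have hq := diffOn_dslope hga
  have hφ : DifferentiableOn ℂ (fun w => dslope f 0 w * dslope g 0 w) (Metric.ball 0 1) := hp.mul hq
  have hφ0 : dslope f 0 0 * dslope g 0 0 = 1 := by simp [hf1, hg1]
  have hc : ∀ n : ℕ, ‖tc (fun w => dslope f 0 w * dslope g 0 w) n‖ ≤ (n + 1) * (n + 4) / 4 := by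
    intro n
    rw [tc_mul (analyticAt_of_diffOn hp (by simp)) (analyticAt_of_diffOn hq (by simp))]
    have hsum : ∑ i ∈ Finset.range (n + 1), ((i : ℝ) + 2) / 2 = (n + 1) * (n + 4) / 4 := by
      induction n with
      | zero => norm_num
      | succ n ih => rw [Finset.sum_range_succ, ih]; push_cast; ring
    rw [← hsum]
    refine (norm_sum_le _ _).trans (Finset.sum_le_sum fun i _ => ?_)
    rw [norm_mul]
    have h1 := norm_tc_dslope_Cminus hfa hf0 hf1 hfd hfC i
    have h2 := norm_tc_dslope_le_one hga hg0 hg1 hgne hgcl (n - i)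
    exact (mul_le_mul h1 h2 (norm_nonneg _) (by positivity)).trans_eq (mul_one _)
  have hmain := norm_sub_lt_one hφ hφ0 hc hz1 hr
  set φ : ℂ → ℂ := fun w => dslope f 0 w * dslope g 0 w with hφdef
  have hzne : z ≠ 0 := norm_pos_iff.mp hz0
  have hφz : φ z ≠ 0 :=
    mul_ne_zero (dslope_ne_zero hf0 hf1 hfne hz1) (dslope_ne_zero hg0 hg1 hgne hz1)
  have hFφ : ∀ w : ℂ, w ≠ 0 → F w = w / φ w := by
    intro w hw
    rw [hF, eq_mul_dslope hf0 w, eq_mul_dslope hg0 w,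
      show w ^ 3 = w ^ 2 * w by ring,
      show w * dslope f 0 w * (w * dslope g 0 w) = w ^ 2 * φ w by simp only [hφdef]; ring]
    exact mul_div_mul_left _ _ (pow_ne_zero 2 hw)
  have hdF : deriv F z = (φ z - z * deriv φ z) / φ z ^ 2 := by
    have h1 : F =ᶠ[nhds z] fun w => w / φ w := by
      filter_upwards [isOpen_ne.mem_nhds hzne] with w hw using hFφ w hw
    have h2 := (analyticAt_of_diffOn hφ hz1).differentiableAt.hasDerivAt
    have h3 := ((hasDerivAt_id z).div h2 hφz).deriv
    rw [h1.deriv_eq]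
    simpa [Pi.div_def] using h3
  have hU : deriv F z * (z / F z) ^ 2 - 1 = φ z - z * deriv φ z - 1 := by
    rw [hdF, hFφ z hzne]
    field_simp
  rw [hU]
  exact hmain
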